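/- Let 𝐮 be the standard sequence over {a, b} whose slope has continued fraction expansion θ = [0, 1, 3, 2, 2, 2, …] (partial quotients a₁ = 1, a₂ = 3, and aₙ = 2 for all n ≥ 3), and let 𝐱_{12} = colour(𝐮, (123456)^ω, (1′2′3′4′5′6′)^ω). If w is a bispecial factor of 𝐱_{12} such that π(w) contains both a and b, then |w|/|v| < 1/10 for every return word v to w in 𝐱_{12}. -/

import Mathlib

open Filter
open scoped ENNReal

namespace BalancedCE

variable {α : Type*} {β : Type*}

/-- The factor of `v` of length `n` starting at position `i`. -/
def factorAt (v : ℕ → α) (i n : ℕ) : List α := (List.range n).map fun k => v (i + k)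

/-- `u` is a factor of the sequence `v`. -/
def IsFactor (v : ℕ → α) (u : List α) : Prop := ∃ i, factorAt v i u.length = u

/-- The word `w` occurs in the sequence `v` at position `i`. -/
def OccursAt (v : ℕ → α) (w : List α) (i : ℕ) : Prop := factorAt v i w.length = w

/-- A sequence is balanced if counts of each letter in equal-length factors differ by at most 1. -/
def Balanced [DecidableEq α] (v : ℕ → α) : Prop :=
  ∀ (a : α) (u w : List α), IsFactor v u → IsFactor v w → u.length = w.length →
    |(u.count a : ℤ) - (w.count a : ℤ)| ≤ 1

def EventuallyPeriodic (v : ℕ → α) : Prop :=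
  ∃ p, 0 < p ∧ ∃ N, ∀ n, N ≤ n → v (n + p) = v n

def Recurrent (v : ℕ → α) : Prop :=
  ∀ u : List α, IsFactor v u → ∀ N : ℕ, ∃ i, N ≤ i ∧ OccursAt v u i

/-- `i < j` are consecutive occurrences of the letter `a` in `v`. -/
def ConsecOcc (v : ℕ → α) (a : α) (i j : ℕ) : Prop :=
  i < j ∧ v i = a ∧ v j = a ∧ ∀ k, i < k → k < j → v k ≠ a

/-- `p` is a period of the finite word `z` (i.e. `z` is a prefix of `u^ω` with `|u| = p`). -/
def IsPeriod (z : List α) (p : ℕ) : Prop :=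
  0 < p ∧ ∀ i, i + p < z.length → z[i]? = z[i + p]?

/-- The minimal period of a finite word. -/
noncomputable def minPeriod (z : List α) : ℕ := sInf {p | IsPeriod z p}

/-- The exponent of a finite word: its length divided by its minimal period. -/
noncomputable def expE (z : List α) : ℝ≥0∞ := (z.length : ℝ≥0∞) / (minPeriod z : ℝ≥0∞)

/-- The critical exponent of a sequence: the supremum of exponents of nonempty factors. -/
noncomputable def criticalExponent (v : ℕ → α) : ℝ≥0∞ :=
  ⨆ (z : List α) (_ : IsFactor v z ∧ z ≠ []), expE z

/-- A Pansiot sequence over a `d`-letter alphabet. -/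
def Pansiot (d : ℕ) (v : ℕ → α) : Prop :=
  (∀ i : ℕ, (factorAt v i (d - 1)).Nodup) ∧
  ∀ (a : α) (i j : ℕ), ConsecOcc v a i j → v (i + 1) ≠ v (j + 1)

/-- The letter `a` has frequency `ρ` in the sequence `v`. -/
def HasFreq [DecidableEq α] (v : ℕ → α) (a : α) (ρ : ℝ) : Prop :=
  Tendsto (fun n => ((factorAt v 0 n).count a : ℝ) / n) atTop (nhds ρ)

/-- Factor complexity of a sequence. -/
noncomputable def complexity (v : ℕ → α) (n : ℕ) : ℕ :=
  Set.ncard {u : List α | IsFactor v u ∧ u.length = n}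

/-- Sturmian sequences: aperiodic binary sequences of factor complexity `n + 1`.
Convention: the letter `a` is `false`, the letter `b` is `true`. -/
def Sturmian (u : ℕ → Bool) : Prop :=
  ¬ EventuallyPeriodic u ∧ ∀ n, complexity u n = n + 1

/-- Prepending a letter to a sequence. -/
def consSeq (c : α) (v : ℕ → α) : ℕ → α := fun n =>
  match n with
  | 0 => c
  | Nat.succ m => v m

/-- A standard sequence: a Sturmian sequence `u` such that `a·u` and `b·u` are Sturmian. -/
def IsStandard (u : ℕ → Bool) : Prop :=
  Sturmian u ∧ Sturmian (consSeq false u) ∧ Sturmian (consSeq true u)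

/-- The slope of a binary sequence, with the convention `ρ_b > ρ_a` (`a = false`, `b = true`). -/
def HasSlope (u : ℕ → Bool) (θ : ℝ) : Prop :=
  ∃ ρa ρb : ℝ, HasFreq u false ρa ∧ HasFreq u true ρb ∧ ρa < ρb ∧ θ = ρa / ρb

/-- `θ` has the (infinite) continued fraction expansion `[0; a 1, a 2, a 3, …]`:
there are complete quotients' fractional parts `t n ∈ (0,1)` with `t 0 = θ` and
`1 / t n = a (n+1) + t (n+1)` for all `n`. (The value `a 0` is irrelevant.) -/
def HasCF (θ : ℝ) (a : ℕ → ℕ) : Prop :=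
  ∃ t : ℕ → ℝ, t 0 = θ ∧ ∀ n, 0 < t n ∧ t n < 1 ∧ 1 / t n = (a (n + 1) : ℝ) + t (n + 1)

/-- Number of positions `< n` where `u` takes the value `c`. -/
def countBefore (u : ℕ → Bool) (c : Bool) (n : ℕ) : ℕ :=
  ((List.range n).filter fun i => u i = c).length

/-- The colouring of a binary sequence `u` by `y` (on the `a = false` positions)
and `y'` (on the `b = true` positions). -/
def colour (u : ℕ → Bool) (y : ℕ → α) (y' : ℕ → β) : ℕ → α ⊕ β := fun n =>
  if u n = false then Sum.inl (y (countBefore u false n))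
  else Sum.inr (y' (countBefore u true n))

/-- A constant gap sequence: periodic, and consecutive occurrences of each occurring
letter are at a constant distance. -/
def ConstantGap (y : ℕ → α) : Prop :=
  (∃ p, 0 < p ∧ ∀ n, y (n + p) = y n) ∧
  ∀ c : α, (∃ i, y i = c) → ∃ g, 0 < g ∧ ∀ i j, ConsecOcc y c i j → j - i = g

/-- The discolouration (projection) map: letters of the first alphabet go to `a = false`,
letters of the second alphabet go to `b = true`. -/
def proj : α ⊕ β → Bool := Sum.elim (fun _ => false) (fun _ => true)

/-- `v` is a return word to `w` in the sequence `z`. -/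
def IsReturnWord (z : ℕ → α) (w v : List α) : Prop :=
  ∃ i j : ℕ, i < j ∧ OccursAt z w i ∧ OccursAt z w j ∧
    (∀ k, i < k → k < j → ¬ OccursAt z w k) ∧ v = factorAt z i (j - i)

def RightSpecial (z : ℕ → α) (w : List α) : Prop :=
  ∃ a b : α, a ≠ b ∧ IsFactor z (w ++ [a]) ∧ IsFactor z (w ++ [b])

def LeftSpecial (z : ℕ → α) (w : List α) : Prop :=
  ∃ a b : α, a ≠ b ∧ IsFactor z (a :: w) ∧ IsFactor z (b :: w)

def Bispecial (z : ℕ → α) (w : List α) : Prop := LeftSpecial z w ∧ RightSpecial z w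

/-- `o` enumerates, in increasing order, all occurrences of `w` in `z`. -/
def IsOccEnum (z : ℕ → α) (w : List α) (o : ℕ → ℕ) : Prop :=
  StrictMono o ∧ (∀ n, OccursAt z w (o n)) ∧ ∀ i, OccursAt z w i → ∃ n, o n = i

/-- The derived sequence of `z` with respect to the occurrence enumeration `o` of a factor:
its `n`-th letter is the return word between the `n`-th and `(n+1)`-st occurrences. -/
def derivedSeq (z : ℕ → α) (o : ℕ → ℕ) : ℕ → List α :=
  fun n => factorAt z (o n) (o (n + 1) - o n)

/-- The slope of a sequence over a two-letter alphabet: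
the ratio of the smaller letter frequency to the larger one. -/
def HasSlope2 {γ : Type*} [DecidableEq γ] (z : ℕ → γ) (θ : ℝ) : Prop :=
  ∃ (c c' : γ) (ρ ρ' : ℝ), c ≠ c' ∧ (∀ n, z n = c ∨ z n = c') ∧
    HasFreq z c ρ ∧ HasFreq z c' ρ' ∧ ρ < ρ' ∧ θ = ρ / ρ'

/-- The purely cyclic constant gap sequence `(0 1 ⋯ (δ-1))^ω` over `ZMod δ`. -/
def cyc (δ : ℕ) : ℕ → ZMod δ := fun n => (n : ZMod δ)

/-- The colouring `colour(u, (1 2 ⋯ δ)^ω, (1' 2' ⋯ δ')^ω)` over `2δ` letters. -/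
def colourCyc (δ : ℕ) (u : ℕ → Bool) : ℕ → ZMod δ ⊕ ZMod δ := colour u (cyc δ) (cyc δ)



lemma fa_length (u : ℕ → α) (i n : ℕ) : (factorAt u i n).length = n := by
  simp [factorAt]

lemma fa_eq_iff (u : ℕ → α) (i j n : ℕ) :
    factorAt u i n = factorAt u j n ↔ ∀ k, k < n → u (i + k) = u (j + k) := by
  simp [factorAt, List.map_inj_left]

lemma fa_take (u : ℕ → α) (i n : ℕ) : (factorAt u i (n+1)).take n = factorAt u i n := by
  unfold factorAt
  rw [List.range_succ, List.map_append, List.take_left']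
  simp

/-- the set of factors of length n -/
def FS (u : ℕ → α) (n : ℕ) : Set (List α) := {w : List α | IsFactor u w ∧ w.length = n}

lemma mem_FS (u : ℕ → α) (n : ℕ) (w : List α) : w ∈ FS u n ↔ ∃ i, factorAt u i n = w := by
  constructor
  · rintro ⟨⟨i, hi⟩, hl⟩
    exact ⟨i, by rw [← hl]; exact hi⟩
  · rintro ⟨i, rfl⟩
    exact ⟨⟨i, by rw [fa_length]⟩, fa_length u i n⟩

lemma FS_ncard {u : ℕ → Bool} (hu : Sturmian u) (n : ℕ) : (FS u n).ncard = n + 1 := hu.2 n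

lemma FS_fin {u : ℕ → Bool} (hu : Sturmian u) (n : ℕ) : (FS u n).Finite := by
  apply Set.finite_of_ncard_pos
  rw [FS_ncard hu]; omega

/-- the window of length n at position i is right special -/
def RS (u : ℕ → Bool) (n i : ℕ) : Prop :=
  ∃ j, factorAt u j n = factorAt u i n ∧ u (j + n) ≠ u (i + n)

lemma RS_exists {u : ℕ → Bool} (hu : Sturmian u) (n : ℕ) : ∃ i, RS u n i := by
  by_contra hno
  have h1 : (FS u (n+1)).ncard ≤ (FS u n).ncard := by
    apply Set.ncard_le_ncard_of_injOn (fun l => l.take n) _ _ (FS_fin hu n)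
    · intro l hl
      obtain ⟨i, rfl⟩ := (mem_FS _ _ _).1 hl
      exact (mem_FS _ _ _).2 ⟨i, (fa_take u i n).symm⟩
    · intro l hl l' hl' h
      obtain ⟨i, rfl⟩ := (mem_FS _ _ _).1 hl
      obtain ⟨j, rfl⟩ := (mem_FS _ _ _).1 hl'
      simp only [fa_take] at h
      have : u (i + n) = u (j + n) := by
        by_contra hne
        exact hno ⟨j, i, h, hne⟩
      rw [fa_eq_iff] at h ⊢
      intro k hk
      rcases Nat.lt_succ_iff_lt_or_eq.1 hk with h' | rfl
      · exact h k h'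
      · exact this
  rw [FS_ncard hu, FS_ncard hu] at h1
  omega

lemma fa_succ_ne {u : ℕ → Bool} {n i j : ℕ} (h : u (i + n) ≠ u (j + n)) :
    factorAt u i (n+1) ≠ factorAt u j (n+1) := by
  intro h'
  rw [fa_eq_iff] at h'
  exact h (h' n (by omega))

lemma fa_succ_ne' {u : ℕ → Bool} {n i j : ℕ} (h : factorAt u i n ≠ factorAt u j n) :
    factorAt u i (n+1) ≠ factorAt u j (n+1) := by
  intro h'
  apply h
  rw [fa_eq_iff] at h' ⊢
  intro k hk
  exact h' k (by omega)

lemma RS_unique {u : ℕ → Bool} (hu : Sturmian u) (n i j : ℕ) (hi : RS u n i) (hj : RS u n j) :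
    factorAt u i n = factorAt u j n := by
  by_contra hne
  obtain ⟨i', hi1, hi2⟩ := hi
  obtain ⟨j', hj1, hj2⟩ := hj
  set A := factorAt u i (n+1) with hA
  set B := factorAt u j (n+1) with hB
  have hAB : A ≠ B := fa_succ_ne' hne
  have hsub : FS u n ⊆ (fun l => List.take n l) '' (FS u (n+1) \ {A, B}) := by
    intro l hl
    obtain ⟨m, rfl⟩ := (mem_FS _ _ _).1 hl
    by_cases h1 : factorAt u m n = factorAt u i n
    · refine ⟨factorAt u i' (n+1), ⟨(mem_FS _ _ _).2 ⟨i', rfl⟩, ?_⟩, ?_⟩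
      · simp only [Set.mem_insert_iff, Set.mem_singleton_iff, not_or]
        exact ⟨fa_succ_ne hi2, fa_succ_ne' (by rw [hi1]; exact hne)⟩
      · simp only [fa_take]; rw [hi1, h1]
    · by_cases h2 : factorAt u m n = factorAt u j n
      · refine ⟨factorAt u j' (n+1), ⟨(mem_FS _ _ _).2 ⟨j', rfl⟩, ?_⟩, ?_⟩
        · simp only [Set.mem_insert_iff, Set.mem_singleton_iff, not_or]
          exact ⟨fa_succ_ne' (by rw [hj1]; exact fun h => hne h.symm), fa_succ_ne hj2⟩
        · simp only [fa_take]; rw [hj1, h2]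
      · refine ⟨factorAt u m (n+1), ⟨(mem_FS _ _ _).2 ⟨m, rfl⟩, ?_⟩, ?_⟩
        · simp only [Set.mem_insert_iff, Set.mem_singleton_iff, not_or]
          exact ⟨fa_succ_ne' h1, fa_succ_ne' h2⟩
        · simp only [fa_take]
  have hfin := FS_fin hu (n+1)
  have hfin' : (FS u (n+1) \ {A, B}).Finite := hfin.subset Set.sdiff_subset
  have c1 := Set.ncard_le_ncard hsub (hfin'.image _)
  have c2 := Set.ncard_image_le (f := fun l => List.take n l) hfin'
  have hABs : ({A, B} : Set (List Bool)) ⊆ FS u (n+1) := by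
    intro x hx
    rcases hx with rfl | rfl
    · exact (mem_FS _ _ _).2 ⟨i, rfl⟩
    · exact (mem_FS _ _ _).2 ⟨j, rfl⟩
  have c3 := Set.ncard_sdiff_add_ncard_of_subset hABs hfin
  rw [Set.ncard_pair hAB, FS_ncard hu] at c3
  rw [FS_ncard hu] at c1
  omega

/-- enough consecutive non right special windows give a contradiction -/
lemma no_nonRS {u : ℕ → Bool} (hu : Sturmian u) (N P : ℕ)
    (h : ∀ k, k ≤ N → ¬ RS u N (P + k)) : False := by
  obtain ⟨R, hR⟩ := RS_exists hu N
  have hfin := FS_fin hu N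
  have hnR : ∀ k, k ≤ N → factorAt u (P + k) N ≠ factorAt u R N := by
    intro k hk he
    apply h k hk
    obtain ⟨j, hj1, hj2⟩ := hR
    by_cases hc : u (P + k + N) = u (R + N)
    · exact ⟨j, by rw [hj1, he], by rw [hc]; exact hj2⟩
    · exact ⟨R, he.symm, fun h => hc h.symm⟩
  have hc : (hfin.toFinset.erase (factorAt u R N)).card < (Finset.range (N+1)).card := by
    rw [Finset.card_erase_of_mem, ← Set.ncard_eq_toFinset_card _ hfin, FS_ncard hu]
    · simp
    · simpa using (mem_FS _ _ _).2 ⟨R, rfl⟩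
  obtain ⟨s, hs, t, ht, hst, he⟩ := Finset.exists_ne_map_eq_of_card_lt_of_maps_to hc
    (f := fun k => factorAt u (P + k) N) (by
      intro k hk
      simp only [Finset.coe_range, Set.mem_Iio] at hk
      simp only [Finset.coe_erase, Set.Finite.coe_toFinset, Set.mem_sdiff, Set.mem_singleton_iff]
      exact ⟨(mem_FS _ _ _).2 ⟨_, rfl⟩, hnR k (by omega)⟩)
  simp only [Finset.mem_range] at hs ht
  wlog hlt : s < t generalizing s t
  · exact this t s hst.symm he.symm ht hs (by omega)
  have nonRS_next : ∀ x y, ¬ RS u N x → factorAt u y N = factorAt u x N → u (y + N) = u (x + N) := by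
    intro x y hx hxy
    by_contra hne
    exact hx ⟨y, hxy, hne⟩
  -- every window from s on is one of the windows s..t-1
  have key : ∀ r, factorAt u (P + t + r) N = factorAt u (P + s + r) N ∧
      ∃ q, q ≤ N ∧ factorAt u (P + s + r) N = factorAt u (P + q) N := by
    intro r
    induction r using Nat.strong_induction_on with
    | _ r ih =>
      rcases Nat.eq_zero_or_pos r with rfl | hr
      · exact ⟨he.symm, s, by omega, rfl⟩
      · obtain ⟨r, rfl⟩ : ∃ r', r = r' + 1 := ⟨r - 1, by omega⟩
        have h1 := ih r (by omega)
        obtain ⟨h2, q, hq, h3⟩ := h1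
        have n1 := nonRS_next (P + q) (P + s + r) (h q hq) h3
        have n2 := nonRS_next (P + q) (P + t + r) (h q hq) (h2.trans h3)
        refine ⟨?_, ?_⟩
        · rw [fa_eq_iff] at h2 ⊢
          intro k hk
          rcases Nat.lt_or_ge (k+1) N with h' | h'
          · have := h2 (k+1) h'
            rw [show P + t + (r+1) + k = P + t + r + (k+1) by ring,
              show P + s + (r+1) + k = P + s + r + (k+1) by ring]
            exact this
          · have : N = k + 1 := by omega
            subst this
            rw [show P + t + (r+1) + k = P + t + r + (k+1) by ring,
              show P + s + (r+1) + k = P + s + r + (k+1) by ring, n1, n2]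
        · by_cases hb : s + (r+1) ≤ N
          · exact ⟨s + (r+1), hb, by rw [show P + s + (r+1) = P + (s + (r+1)) by ring]⟩
          · have hrt : r + 1 - (t - s) < r + 1 := by omega
            obtain ⟨g1, q', hq', g2⟩ := ih _ hrt
            refine ⟨q', hq', ?_⟩
            rw [← g2, ← g1]
            congr 1
            omega
  apply hu.1
  refine ⟨t - s, by omega, P + s + N, ?_⟩
  intro n hn
  obtain ⟨r, rfl⟩ : ∃ r, n = P + s + r + N := ⟨n - (P+s+N), by omega⟩
  obtain ⟨h2, q, hq, h3⟩ := key r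
  have n1 := nonRS_next (P + q) (P + s + r) (h q hq) h3
  have n2 := nonRS_next (P + q) (P + t + r) (h q hq) (h2.trans h3)
  rw [show P + s + r + N + (t - s) = P + t + r + N by omega, n1, n2]

/-- the forbidden pattern: two distinct letters each surrounding a common palindrome. -/
lemma no_pattern {u : ℕ → Bool} (hu : Sturmian u) (m P P' : ℕ)
    (hw : ∀ k, k < m → u (P + 1 + k) = u (P' + 1 + k))
    (hpal : ∀ k, k < m → u (P + 1 + k) = u (P + 1 + (m - 1 - k)))
    (h0 : u (P + m + 1) = u P) (h0' : u (P' + m + 1) = u P') (hne : u P ≠ u P') : False := by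
  -- one of the two extensions is not right special
  have hw' : factorAt u (P+1) m = factorAt u (P'+1) m := (fa_eq_iff _ _ _ _).2 hw
  have hor : ¬ RS u (m+1) P ∨ ¬ RS u (m+1) P' := by
    by_contra hcon
    push Not at hcon
    have := RS_unique hu _ _ _ hcon.1 hcon.2
    rw [fa_eq_iff] at this
    exact hne (by simpa using this 0 (by omega))
  wlog hP : ¬ RS u (m+1) P generalizing P P'
  · refine this P' P (fun k hk => (hw k hk).symm) ?_ h0' h0 hne.symm hw'.symm hor.symm
      (hor.resolve_left hP)
    intro k hk
    rw [← hw k hk, ← hw _ (by omega)]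
    exact hpal k hk
  have hRSw : RS u m (P+1) := by
    refine ⟨P'+1, hw'.symm, ?_⟩
    rw [show P' + 1 + m = P' + m + 1 by ring, show P + 1 + m = P + m + 1 by ring, h0, h0']
    exact hne.symm
  apply no_nonRS hu (m+1) P
  intro k hk hRS
  have hs : RS u m (P + k + 1) := by
    obtain ⟨j, hj1, hj2⟩ := hRS
    refine ⟨j + 1, ?_, ?_⟩
    · rw [fa_eq_iff] at hj1 ⊢
      intro l hl
      have := hj1 (l+1) (by omega)
      rw [show j + 1 + l = j + (l+1) by ring, this]
      congr 1; ring
    · rw [show j + 1 + m = j + (m+1) by ring, show P + k + 1 + m = P + k + (m+1) by ring]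
      exact hj2
  have he := RS_unique hu m _ _ hs hRSw
  rw [fa_eq_iff] at he
  have hk0 : u (P + k) ≠ u P := by
    intro hcc
    have : factorAt u P (m+1) = factorAt u (P+k) (m+1) := by
      rw [fa_eq_iff]
      intro l hl
      rcases Nat.eq_zero_or_pos l with rfl | hl0
      · simpa using hcc.symm
      · have := he (l-1) (by omega)
        rw [show P + k + 1 + (l-1) = P + k + l by omega,
          show P + 1 + (l-1) = P + l by omega] at this
        exact this.symm
    apply hP
    obtain ⟨j, hj1, hj2⟩ := hRS
    by_cases hx : u (P + (m+1)) = u (P + k + (m+1))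
    · exact ⟨j, by rw [hj1, this], by rw [hx]; exact hj2⟩
    · exact ⟨P + k, this.symm, fun h => hx h.symm⟩
  rcases Nat.eq_zero_or_pos k with rfl | hkp
  · exact hk0 rfl
  · rcases Nat.eq_or_lt_of_le hk with rfl | hlt
    · exact hk0 (by rw [← h0]; rfl)
    · have e1 := he (m - k) (by omega)
      rw [show P + k + 1 + (m - k) = P + m + 1 by omega, h0] at e1
      have e2 := hpal (k-1) (by omega)
      rw [show m - 1 - (k-1) = m - k by omega, show P + 1 + (k-1) = P + k by omega] at e2
      exact hk0 (e2.trans e1.symm)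

lemma cb_zero (u : ℕ → Bool) (c : Bool) : countBefore u c 0 = 0 := by simp [countBefore]

lemma cb_succ (u : ℕ → Bool) (c : Bool) (n : ℕ) :
    countBefore u c (n+1) = countBefore u c n + if u n = c then 1 else 0 := by
  unfold countBefore
  rw [List.range_succ, List.filter_append, List.length_append]
  by_cases h : u n = c <;> simp [h]

/-- Sturmian sequences are balanced (counts of letter `false`). -/
lemma balanced_of_sturmian {u : ℕ → Bool} (hu : Sturmian u) (n : ℕ) : ∀ i j : ℕ,
    (countBefore u false (i+n) : ℤ) - countBefore u false i
      ≤ (countBefore u false (j+n) : ℤ) - countBefore u false j + 1 := by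
  set S : ℕ → ℤ := fun k => (countBefore u false k : ℤ) with hS
  have hstep : ∀ k, S (k+1) = S k + if u k = false then 1 else 0 := by
    intro k; simp only [hS, cb_succ]; push_cast; rfl
  change ∀ i j, S (i+n) - S i ≤ S (j+n) - S j + 1
  induction n using Nat.strong_induction_on with
  | _ n ih =>
  intro i j
  by_contra hcon
  push Not at hcon
  have g : ∀ a b i j, a ≤ b → b - a < n →
      S (i+b) - S (i+a) ≤ S (j+b) - S (j+a) + 1 := by
    intro a b i j hab hlt
    have := ih (b-a) hlt (i+a) (j+a)
    rwa [show i + a + (b-a) = i + b by omega, show j + a + (b - a) = j + b by omega] at this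
  have hn2 : 2 ≤ n := by
    by_contra hlt
    have : n = 0 ∨ n = 1 := by omega
    rcases this with rfl | rfl
    · simp at hcon
    · rw [hstep, hstep] at hcon
      split_ifs at hcon <;> omega
  obtain ⟨m, rfl⟩ : ∃ m, n = m + 2 := ⟨n-2, by omega⟩
  have hg : ∀ k, 1 ≤ k → k ≤ m+1 → S (i+k) - S i = S (j+k) - S j + 1 := by
    intro k h1 h2
    have a1 := g 0 k i j (by omega) (by omega)
    have a2 := g k (m+2) i j (by omega) (by omega)
    simp only [Nat.add_zero] at a1
    linarith
  have hi0 : u i = false ∧ u j = true := by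
    have := hg 1 le_rfl (by omega)
    rw [hstep, hstep] at this
    cases hh : u i <;> cases hh' : u j <;> simp [hh, hh'] at this ⊢
  have hend : u (i+m+1) = false ∧ u (j+m+1) = true := by
    have h1 := hg (m+1) (by omega) le_rfl
    have e1 := hstep (i+m+1)
    have e2 := hstep (j+m+1)
    have hcon' : S (j+m+1+1) - S j + 1 < S (i+m+1+1) - S i := hcon
    have h1' : S (i+m+1) - S i = S (j+m+1) - S j + 1 := h1
    cases hh : u (i+m+1) <;> cases hh' : u (j+m+1) <;> simp [hh, hh'] at e1 e2 ⊢ <;> linarith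
  have hmid : ∀ k, k < m → u (i+1+k) = u (j+1+k) := by
    intro k hk
    have h1 := hg (k+1) (by omega) (by omega)
    have h2 := hg (k+2) (by omega) (by omega)
    have e1 := hstep (i+(k+1))
    have e2 := hstep (j+(k+1))
    have e3 : S (i+(k+1)+1) = S (i + (k+2)) := rfl
    have e4 : S (j+(k+1)+1) = S (j + (k+2)) := rfl
    rw [show i+1+k = i+(k+1) by ring, show j+1+k = j+(k+1) by ring]
    cases hh : u (i+(k+1)) <;> cases hh' : u (j+(k+1)) <;> simp [hh, hh'] at e1 e2 ⊢ <;> linarith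
  -- palindromicity
  have hsum : ∀ k, k ≤ m → S (i+1+k) - S (i+1) = S (i+1+m) - S (i+1+m-k) := by
    intro k hk
    have c1 := ih (k+1) (by omega) i (j+m+1-k)
    have c2 := ih (k+1) (by omega) (i+m+1-k) j
    rw [show j+m+1-k+(k+1) = j+m+1+1 by omega] at c1
    rw [show i+m+1-k+(k+1) = i+m+1+1 by omega] at c2
    have e1 := hstep i
    have e2 := hstep j
    have e3 := hstep (i+m+1)
    have e4 := hstep (j+m+1)
    simp [hi0] at e1 e2
    simp [hend] at e3 e4
    have d1 := hg (k+1) (by omega) (by omega)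
    have d2 := hg (m+1-k) (by omega) (by omega)
    have d3 := hg (m+1) (by omega) (by omega)
    rw [show i + 1 + k = i + (k+1) by ring, show i+1+m-k = i+m+1-k by omega,
      show i+1+m = i+m+1 by ring]
    rw [show i + (m+1-k) = i+m+1-k by omega, show j + (m+1-k) = j+m+1-k by omega] at d2
    rw [show i + (m+1) = i+m+1 by omega, show j + (m+1) = j+m+1 by omega] at d3
    linarith
  have hpal : ∀ k, k < m → u (i+1+k) = u (i+1+(m-1-k)) := by
    intro k hk
    have a1 := hsum k (by omega)
    have a2 := hsum (k+1) (by omega)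
    have e1 := hstep (i+1+k)
    have e2 := hstep (i+1+(m-1-k))
    rw [show i+1+(m-1-k)+1 = i+1+m-k by omega] at e2
    rw [show i+1+m-(k+1) = i+1+(m-1-k) by omega, show i+1+(k+1) = i+1+k+1 by ring] at a2
    cases hh : u (i+1+k) <;> cases hh' : u (i+1+(m-1-k)) <;> simp [hh, hh'] at e1 e2 ⊢ <;> linarith
  exact no_pattern hu m i j hmid hpal (by rw [hend.1, hi0.1]) (by rw [hend.2, hi0.2])
    (by rw [hi0.1, hi0.2]; simp)

lemma cb_le (u : ℕ → Bool) (c : Bool) (n : ℕ) :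
    (factorAt u 0 n).count c = countBefore u c n := by
  induction n with
  | zero => simp [factorAt, countBefore]
  | succ n ih =>
    rw [cb_succ, ← ih]
    unfold factorAt
    rw [List.range_succ, List.map_append, List.count_append]
    by_cases h : u n = c <;> simp [h]

lemma cb_add (u : ℕ → Bool) (n : ℕ) : countBefore u false n + countBefore u true n = n := by
  induction n with
  | zero => simp [cb_zero]
  | succ n ih =>
    rw [cb_succ, cb_succ]
    cases h : u n <;> simp <;> omega

lemma drift {u : ℕ → Bool} (hu : Sturmian u) {ρ : ℝ} (hρ : HasFreq u false ρ) (i n : ℕ) :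
    |(countBefore u false (i+n) : ℝ) - countBefore u false i - n * ρ| ≤ 1 := by
  rcases Nat.eq_zero_or_pos n with rfl | hn
  · simp
  set c : ℝ := (countBefore u false (i+n) : ℝ) - countBefore u false i with hc
  have b1 : ∀ j, c ≤ (countBefore u false (j+n) : ℝ) - countBefore u false j + 1 := by
    intro j
    have := balanced_of_sturmian hu n i j
    rw [hc]; exact_mod_cast this
  have b2 : ∀ j, (countBefore u false (j+n) : ℝ) - countBefore u false j ≤ c + 1 := by
    intro j
    have := balanced_of_sturmian hu n j i
    rw [hc]; exact_mod_cast this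
  have s1 : ∀ k : ℕ, (k : ℝ) * (c - 1) ≤ countBefore u false (k * n) ∧
      (countBefore u false (k * n) : ℝ) ≤ k * (c + 1) := by
    intro k
    induction k with
    | zero => simp [cb_zero]
    | succ k ih =>
      have h1 := b1 (k*n)
      have h2 := b2 (k*n)
      rw [show (k+1)*n = k*n + n by ring]
      push_cast
      constructor <;> linarith [ih.1, ih.2]
  have hnR : (0:ℝ) < n := by exact_mod_cast hn
  have ht : Tendsto (fun k : ℕ => (k+1) * n) atTop atTop := by
    apply tendsto_atTop_mono (f := fun k : ℕ => k) _ tendsto_id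
    intro k
    nlinarith
  have hlim : Tendsto (fun k : ℕ => (countBefore u false ((k+1)*n) : ℝ) / (((k+1)*n : ℕ) : ℝ))
      atTop (nhds ρ) := by
    have h := hρ
    unfold HasFreq at h
    simp only [cb_le] at h
    exact h.comp ht
  have l1 : (c - 1) / n ≤ ρ := by
    apply ge_of_tendsto' hlim
    intro k
    have := (s1 (k+1)).1
    push_cast at this ⊢
    rw [div_le_div_iff₀ hnR (by positivity)]
    nlinarith
  have l2 : ρ ≤ (c + 1) / n := by
    apply le_of_tendsto' hlim
    intro k
    have := (s1 (k+1)).2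
    push_cast at this ⊢
    rw [div_le_div_iff₀ (by positivity) hnR]
    nlinarith
  rw [div_le_iff₀ hnR] at l1
  rw [le_div_iff₀ hnR] at l2
  rw [abs_le]
  constructor <;> linarith

/-- the frequency of the letter `false` -/
lemma freq_value {u : ℕ → Bool} {θ : ℝ} (hθ : HasSlope u θ) {a : ℕ → ℕ} (hcf : HasCF θ a)
    (ha1 : a 1 = 1) (ha2 : a 2 = 3) (ha : ∀ n, 3 ≤ n → a n = 2) :
    HasFreq u false ((6 + √2) / 17) := by
  obtain ⟨ρa, ρb, hfa, hfb, hlt, hq⟩ := hθ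
  have hsum : ρa + ρb = 1 := by
    have h := hfa.add hfb
    refine tendsto_nhds_unique h ?_
    apply tendsto_const_nhds.congr'
    filter_upwards [eventually_gt_atTop 0] with n hn
    have hnR : (n:ℝ) ≠ 0 := by positivity
    rw [cb_le, cb_le, ← add_div]
    have : ((countBefore u false n : ℝ) + countBefore u true n) = n := by
      exact_mod_cast cb_add u n
    rw [this, div_self hnR]
  obtain ⟨t, ht0, ht⟩ := hcf
  have h2 : √2 * √2 = 2 := Real.mul_self_sqrt (by norm_num)
  have h2b : (1.4:ℝ) < √2 := by
    rw [Real.lt_sqrt] <;> norm_num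
  have h2c : √2 < 1.5 := by
    rw [Real.sqrt_lt'] <;> norm_num
  have hrec : ∀ n, 2 ≤ n → t n * (2 + t (n+1)) = 1 := by
    intro n hn
    have h := (ht n).2.2
    rw [ha (n+1) (by omega)] at h
    have hp := (ht n).1
    field_simp at h
    push_cast at h
    linarith
  have contr : ∀ n, 2 ≤ n → |t n - (√2 - 1)| ≤ (1/2) * |t (n+1) - (√2 - 1)| := by
    intro n hn
    have e : t n - (√2 - 1) = - (t n * (√2 - 1)) * (t (n+1) - (√2 - 1)) := by
      have := hrec n hn
      linear_combination (√2 - 1) * this + (- t n) * h2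
    rw [e, abs_mul]
    apply mul_le_mul_of_nonneg_right _ (abs_nonneg _)
    have p1 := (ht n).1
    have p2 := (ht n).2.1
    rw [abs_neg, abs_of_pos (by nlinarith)]
    nlinarith
  have bd : ∀ k, |t 2 - (√2 - 1)| ≤ (1/2)^k * |t (2+k) - (√2 - 1)| := by
    intro k
    induction k with
    | zero => simp
    | succ k ih =>
      have := contr (2+k) (by omega)
      rw [show 2 + (k+1) = 2+k+1 by ring, pow_succ]
      calc _ ≤ _ := ih
        _ ≤ (1/2)^k * ((1/2) * |t (2+k+1) - (√2 - 1)|) := by gcongr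
        _ = _ := by ring
  have t2 : t 2 = √2 - 1 := by
    have bd' : ∀ k : ℕ, |t 2 - (√2 - 1)| ≤ (1/2:ℝ)^k := by
      intro k
      refine (bd k).trans ?_
      have p1 := (ht (2+k)).1
      have p2 := (ht (2+k)).2.1
      have : |t (2+k) - (√2 - 1)| ≤ 1 := by rw [abs_le]; constructor <;> linarith
      calc _ ≤ (1/2:ℝ)^k * 1 := by gcongr
        _ = _ := by ring
    have lim : Tendsto (fun k : ℕ => (1/2:ℝ)^k) atTop (nhds 0) :=
      tendsto_pow_atTop_nhds_zero_of_lt_one (by norm_num) (by norm_num)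
    have := ge_of_tendsto' lim bd'
    have := abs_nonpos_iff.1 this
    linarith
  have e0 := (ht 0).2.2
  have e1 := (ht 1).2.2
  rw [ha1] at e0
  rw [ha2, t2] at e1
  have p0 := (ht 0).1
  have p1 := (ht 1).1
  have f1 : t 1 * (2 + √2) = 1 := by
    field_simp at e1
    push_cast at e1
    linarith
  have f0 : t 0 * (1 + t 1) = 1 := by
    field_simp at e0
    push_cast at e0
    linarith
  have hb : 0 < ρb := by linarith
  have hq' : t 0 * ρb = ρa := by
    rw [ht0, hq]; field_simp
  have t1 : t 1 = 1 - √2/2 := by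
    have : (2 + √2) ≠ 0 := by positivity
    apply mul_right_cancel₀ this
    rw [f1]; linear_combination h2/2
  have : ρa = (6 + √2) / 17 := by
    have hb' : ρb = ρa * (1 + t 1) := by rw [← hq']; linear_combination (-ρb) * f0
    rw [hb', t1] at hsum
    linear_combination (6+√2)*2/34 * hsum + ρa / 34 * h2
  rwa [← this]

/-- walking argument -/
lemma walk (ψ : ℕ → ℝ) (i N : ℕ) (hN : 0 < N) (g e : ℝ)
    (hb : ∀ k l, i ≤ k → k < i + N → i ≤ l → l < i + N → ψ k - ψ l ≤ 1 - e)
    (hstep : ∀ k, i ≤ k → k < i + N → ∃ k', i ≤ k' ∧ k' < i + N ∧ ∃ s : ℝ, 0 < s ∧ s ≤ g ∧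
      ∃ z : ℤ, ψ k' = ψ k - s + z) : e ≤ g := by
  by_contra hlt
  push Not at hlt
  obtain ⟨k, hk, hmin⟩ := Finset.exists_min_image (Finset.Ico i (i+N)) ψ
    ⟨i, by simp; omega⟩
  rw [Finset.mem_Ico] at hk
  obtain ⟨k', h1, h2, s, hs, hsg, z, hz⟩ := hstep k hk.1 hk.2
  have m := hmin k' (by rw [Finset.mem_Ico]; exact ⟨h1, h2⟩)
  have b := hb k' k h1 h2 hk.1 hk.2
  have : (z:ℝ) < 1 := by linarith
  have : z < 1 := by exact_mod_cast this
  have : z ≤ 0 := by omega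
  have : (z:ℝ) ≤ 0 := by exact_mod_cast this
  linarith

/-- Two convergents on opposite sides. -/
lemma gap (S : ℕ → ℤ) (α σ : ℝ) (hσ : σ = 1 ∨ σ = -1) (Q Q' : ℕ) (R R' : ℤ) (h h' : ℝ)
    (hh : σ * (Q * α - R) = h) (hh' : σ * (Q' * α - R') = - h')
    (hpos : 0 < h) (hpos' : 0 < h') (hle : h' ≤ h)
    (i N : ℕ) (hN : 0 < N) (e : ℝ)
    (hb : ∀ k l, i ≤ k → k < i + N → i ≤ l → l < i + N →
      ((S k : ℝ) - k * α) - ((S l : ℝ) - l * α) ≤ 1 - e) :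
    (Q + Q' ≤ N → e ≤ h) ∧ (Q ≤ Q' → Q' ≤ N → e ≤ h + h') := by
  have hzσ : ∃ τ : ℤ, σ = τ ∧ τ * τ = 1 := by
    rcases hσ with rfl | rfl
    · exact ⟨1, by simp, by simp⟩
    · exact ⟨-1, by simp, by simp⟩
  obtain ⟨τ, hτ, hττ⟩ := hzσ
  have hb' : ∀ k l, i ≤ k → k < i + N → i ≤ l → l < i + N →
      σ * ((S k : ℝ) - k * α) - σ * ((S l : ℝ) - l * α) ≤ 1 - e := by
    intro k l h1 h2 h3 h4
    rcases hσ with rfl | rfl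
    · simpa using hb k l h1 h2 h3 h4
    · have := hb l k h3 h4 h1 h2
      linarith
  -- the integer correction
  constructor
  · intro hNQ
    apply walk (fun k => σ * ((S k : ℝ) - k * α)) i N hN h e hb'
    intro k h1 h2
    by_cases hc : k + Q < i + N
    · refine ⟨k + Q, by omega, hc, h, hpos, le_rfl, τ * (S (k+Q) - S k - R), ?_⟩
      push_cast
      rw [← hτ, ← hh]; ring
    · obtain ⟨k', rfl⟩ : ∃ k', k = k' + Q' := ⟨k - Q', by omega⟩
      refine ⟨k', by omega, by omega, h', hpos', hle, τ * (S k' - S (k' + Q') + R'), ?_⟩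
      push_cast
      rw [← hτ]
      linear_combination hh'
  · intro hQQ hNQ
    apply walk (fun k => σ * ((S k : ℝ) - k * α)) i N hN (h + h') e hb'
    intro k h1 h2
    by_cases hc : k + Q < i + N
    · refine ⟨k + Q, by omega, hc, h, hpos, by linarith, τ * (S (k+Q) - S k - R), ?_⟩
      push_cast
      rw [← hτ, ← hh]; ring
    · by_cases hc' : i + Q' ≤ k
      · obtain ⟨k', rfl⟩ : ∃ k', k = k' + Q' := ⟨k - Q', by omega⟩
        refine ⟨k', by omega, by omega, h', hpos', by linarith, τ * (S k' - S (k' + Q') + R'), ?_⟩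
        push_cast
        rw [← hτ]
        linear_combination hh'
      · obtain ⟨k', hk'⟩ : ∃ k', k + Q = k' + Q' := ⟨k + Q - Q', by omega⟩
        refine ⟨k', by omega, by omega, h + h', by linarith, le_rfl, τ * (S k' - S k + R' - R), ?_⟩
        have hkR : (k : ℝ) + Q = k' + Q' := by exact_mod_cast hk'
        push_cast
        rw [← hτ]
        linear_combination hh' - hh + σ * α * hkR

/-- denominators of convergents -/
def qq : ℕ → ℕ
  | 0 => 2
  | 1 => 7
  | (n+2) => 2 * qq (n+1) + qq n

/-- numerators of convergents -/
def rr : ℕ → ℤ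
  | 0 => 1
  | 1 => 3
  | (n+2) => 2 * rr (n+1) + rr n

/-- distances -/
noncomputable def hh (k : ℕ) : ℝ := (5 - 2 * √2) / 17 * (√2 - 1) ^ k

lemma hh_rec (k : ℕ) : hh k = 2 * hh (k+1) + hh (k+2) := by
  have h2 : √2 * √2 = 2 := Real.mul_self_sqrt (by norm_num)
  unfold hh
  rw [pow_succ, pow_succ, pow_succ]
  linear_combination (-(5 - 2 * √2) / 17 * (√2 - 1) ^ k) * h2

lemma hh_pos (k : ℕ) : 0 < hh k := by
  have h2b : (1.4:ℝ) < √2 := by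
    rw [Real.lt_sqrt] <;> norm_num
  have h2c : √2 < 1.5 := by
    rw [Real.sqrt_lt'] <;> norm_num
  unfold hh
  have : 0 < √2 - 1 := by linarith
  have : 0 < 5 - 2 * √2 := by linarith
  positivity

lemma hh_conv (k : ℕ) :
    (-1 : ℝ)^(k+1) * (qq k * ((6 + √2)/17) - rr k) = hh k := by
  have h2 : √2 * √2 = 2 := Real.mul_self_sqrt (by norm_num)
  suffices H : (-1 : ℝ)^(k+1) * (qq k * ((6 + √2)/17) - rr k) = hh k ∧
      (-1 : ℝ)^(k+2) * (qq (k+1) * ((6 + √2)/17) - rr (k+1)) = hh (k+1) from H.1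
  induction k with
  | zero =>
    constructor
    · simp [qq, rr, hh]; ring
    · simp [qq, rr, hh]; linear_combination (2/17) * h2
  | succ k ih =>
    refine ⟨ih.2, ?_⟩
    have r1 : (qq (k+1+1) : ℝ) = 2 * qq (k+1) + qq k := by
      rw [show qq (k+1+1) = 2 * qq (k+1) + qq k from rfl]; push_cast; rfl
    have r2 : (rr (k+1+1) : ℝ) = 2 * rr (k+1) + rr k := by
      rw [show rr (k+1+1) = 2 * rr (k+1) + rr k from rfl]; push_cast; rfl
    have r3 := hh_rec k
    rw [r1, r2, show hh (k+1+1) = hh k - 2 * hh (k+1) by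
      rw [show k+1+1 = k+2 from rfl]; linarith, ← ih.1, ← ih.2]
    ring

lemma qq_pos (k : ℕ) : 2 ≤ qq k := by
  induction k using Nat.strong_induction_on with
  | _ k ih =>
    match k with
    | 0 => simp [qq]
    | 1 => simp [qq]
    | k+2 =>
      have := ih k (by omega)
      rw [show qq (k+2) = 2 * qq (k+1) + qq k from rfl]; omega

lemma qq_dbl (k : ℕ) : 2 * qq k ≤ qq (k+1) := by
  match k with
  | 0 => simp [qq]
  | k+1 =>
    rw [show qq (k+1+1) = 2 * qq (k+1) + qq k from rfl]; omega

lemma qq_ge (k : ℕ) : k < qq k := by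
  induction k with
  | zero => simp [qq]
  | succ k ih => have := qq_dbl k; omega

lemma det (k : ℕ) : (qq k : ℤ) * rr (k+1) - qq (k+1) * rr k = (-1)^(k+1) := by
  induction k with
  | zero => simp [qq, rr]
  | succ k ih =>
    rw [show qq (k+1+1) = 2 * qq (k+1) + qq k from rfl,
      show rr (k+1+1) = 2 * rr (k+1) + rr k from rfl, pow_succ, ← ih]
    push_cast; ring

/-- best approximation -/
lemma best (k : ℕ) (p A : ℤ) (hp : 0 < p) (hD : |(p : ℝ) * ((6 + √2)/17) - A| < hh k) :
    (qq (k+1) : ℤ) ≤ p := by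
  set α : ℝ := (6 + √2)/17 with hα
  set ε : ℤ := (-1)^(k+1) with hε
  have hεε : ε * ε = 1 := by rw [hε, ← mul_pow]; simp
  set x : ℤ := ε * (p * rr (k+1) - A * qq (k+1)) with hx
  set y : ℤ := ε * (A * qq k - p * rr k) with hy
  have hdet := det k
  rw [← hε] at hdet
  have e1 : p = x * qq k + y * qq (k+1) := by
    rw [hx, hy]
    linear_combination (-p * ε) * hdet - p * hεε
  have e2 : A = x * rr k + y * rr (k+1) := by
    rw [hx, hy]
    linear_combination (-A * ε) * hdet - A * hεε
  have c1 := hh_conv k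
  have c2 := hh_conv (k+1)
  rw [← hα] at c1 c2
  have hεR : ((ε : ℤ) : ℝ) = (-1)^(k+1) := by rw [hε]; push_cast; rfl
  have e3 : (ε : ℝ) * ((p : ℝ) * α - A) = x * hh k - y * hh (k+1) := by
    rw [← c1, ← c2, hεR, e1, e2]
    push_cast
    ring
  have hab : |(x : ℝ) * hh k - y * hh (k+1)| < hh k := by
    rw [← e3, abs_mul, hεR]
    simpa using hD
  have p0 := hh_pos k
  have p1 := hh_pos (k+1)
  have q0 := qq_pos k
  have q1 := qq_pos (k+1)
  rw [abs_lt] at hab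
  by_contra hlt
  push Not at hlt
  have q0' : (0:ℤ) < qq k := by omega
  have q1' : (0:ℤ) < qq (k+1) := by omega
  rcases lt_trichotomy y 0 with hy0 | hy0 | hy0
  · -- y negative: x must be positive
    have hx0 : 0 < x := by
      by_contra hc
      push Not at hc
      nlinarith
    have hx1 : (1:ℝ) ≤ x := by exact_mod_cast hx0
    have hy1 : (y:ℝ) ≤ 0 := by exact_mod_cast hy0.le
    nlinarith [hab.2]
  · rw [hy0] at hab e1
    have hx0 : 0 < x := by
      by_contra hc
      push Not at hc
      nlinarith
    have hx1 : (1:ℝ) ≤ x := by exact_mod_cast hx0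
    push_cast at hab
    nlinarith [hab.2]
  · have hx0 : x < 0 := by
      by_contra hc
      push Not at hc
      nlinarith
    have hx1 : (x:ℝ) ≤ -1 := by exact_mod_cast (by omega : x ≤ -1)
    have hy1 : (0:ℝ) ≤ y := by exact_mod_cast hy0.le
    nlinarith [hab.1]

/-- the arithmetic core -/
lemma core (S : ℕ → ℤ) (i n : ℕ) (hn : 1 ≤ n) (p A : ℤ) (hp : 0 < p)
    (hb : ∀ k l, i ≤ k → k < i + (n+1) → i ≤ l → l < i + (n+1) →
      ((S k : ℝ) - k * ((6 + √2)/17)) - ((S l : ℝ) - l * ((6 + √2)/17))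
        ≤ 1 - 6 * |(p : ℝ) * ((6 + √2)/17) - A|) :
    5 * (n : ℤ) < 3 * p := by
  set α : ℝ := (6 + √2)/17 with hα
  set D : ℝ := |(p : ℝ) * α - A| with hD
  have P := hh_pos
  have Rc := hh_rec
  have c0 : 2 * α - 1 = - hh 0 := by
    have := hh_conv 0
    rw [← hα] at this
    simp [qq, rr] at this
    linarith
  have c1 : 7 * α - 3 = hh 1 := by
    have := hh_conv 1
    rw [← hα] at this
    simp [qq, rr] at this
    linarith
  have d1 := Rc 0
  have d2 := Rc 1
  have z0 := P 0
  have z1 := P 1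
  have z2 := P 2
  have z3 := P 3
  norm_num at d1 d2
  by_cases hsmall : n + 1 < 7
  · have G1 := gap S α 1 (Or.inl rfl) 1 2 0 1 (α) (hh 0) (by push_cast; ring)
      (by push_cast; linarith) (by linarith) (by linarith) (by linarith)
      i (n+1) (by omega) (6*D) hb
    by_cases h3 : n + 1 < 3
    · have := G1.2 (by omega) (by omega)
      have := best 0 p A hp (by rw [← hα, ← hD]; linarith)
      simp [qq] at this
      omega
    · by_cases h5 : n + 1 < 5
      · have := G1.1 (by omega)
        have := best 0 p A hp (by rw [← hα, ← hD]; linarith)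
        simp [qq] at this
        omega
      · have G2 := gap S α 1 (Or.inl rfl) 3 2 1 1 (3*α-1) (hh 0) (by push_cast; ring)
          (by push_cast; linarith) (by linarith) (by linarith) (by linarith)
          i (n+1) (by omega) (6*D) hb
        have := G2.1 (by omega)
        have := best 1 p A hp (by rw [← hα, ← hD]; linarith)
        simp [qq] at this
        omega
  · -- find the scale
    obtain ⟨k, hk1, hk2⟩ : ∃ k, qq (k+1) ≤ n + 1 ∧ n + 1 < qq (k+2) := by
      have hex : ∃ k, n + 1 < qq (k+2) := ⟨n+1, by have := qq_ge (n+1+2); omega⟩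
      classical
      refine ⟨Nat.find hex, ?_, Nat.find_spec hex⟩
      rcases Nat.eq_zero_or_pos (Nat.find hex) with h0 | h0
      · rw [h0]; simp [qq]; omega
      · have := Nat.find_min hex (m := Nat.find hex - 1) (by omega)
        rw [show Nat.find hex - 1 + 2 = Nat.find hex + 1 by omega] at this
        omega
    have r0 := Rc k
    have r1 := Rc (k+1)
    have y0 := P k
    have y1 := P (k+1)
    have y2 := P (k+2)
    have y3 := P (k+3)
    have r2 := Rc (k+2)
    have y4 := P (k+4)
    simp only [Nat.add_assoc, Nat.reduceAdd] at r1 r2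
    have k1 := qq_dbl k
    have k2 := qq_dbl (k+1)
    have k3 := qq_dbl (k+2)
    have k4 : qq (k+2) = 2 * qq (k+1) + qq k := rfl
    have hc0 := hh_conv k
    have hc1 := hh_conv (k+1)
    rw [← hα] at hc0 hc1
    have G := gap S α ((-1)^(k+1)) (neg_one_pow_eq_or ℝ (k+1)) (qq k) (qq (k+1)) (rr k) (rr (k+1))
      (hh k) (hh (k+1)) hc0 (by rw [← hc1, pow_succ]; ring) y0 y1 (by linarith)
      i (n+1) (by omega) (6*D) hb
    by_cases hbig : qq k + qq (k+1) ≤ n + 1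
    · have := G.1 hbig
      have := best (k+2) p A hp (by rw [← hα, ← hD]; linarith)
      rw [show k+2+1 = k+3 from rfl] at this
      simp only [Nat.add_assoc, Nat.reduceAdd] at k3
      omega
    · have := G.2 (by omega) hk1
      have := best (k+1) p A hp (by rw [← hα, ← hD]; linarith)
      rw [show k+1+1 = k+2 from rfl] at this
      omega

lemma colour_false {u : ℕ → Bool} {n : ℕ} (h : u n = false) :
    colourCyc 6 u n = Sum.inl ((countBefore u false n : ℕ) : ZMod 6) := by
  simp [colourCyc, colour, cyc, h]

lemma colour_true {u : ℕ → Bool} {n : ℕ} (h : u n = true) :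
    colourCyc 6 u n = Sum.inr ((countBefore u true n : ℕ) : ZMod 6) := by
  simp [colourCyc, colour, cyc, h]

lemma proj_colour (u : ℕ → Bool) (n : ℕ) : proj (colourCyc 6 u n) = u n := by
  cases h : u n
  · rw [colour_false h]; rfl
  · rw [colour_true h]; rfl

lemma cb_shift {u : ℕ → Bool} {i j n : ℕ} (h : ∀ k, k < n → u (i+k) = u (j+k)) (c : Bool) :
    ∀ k, k ≤ n → (countBefore u c (i+k) : ℤ) - countBefore u c i
      = countBefore u c (j+k) - countBefore u c j := by
  intro k hk
  induction k with
  | zero => simp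
  | succ k ih =>
    have := ih (by omega)
    rw [← Nat.add_assoc, ← Nat.add_assoc, cb_succ, cb_succ, h k (by omega)]
    push_cast
    linarith

theorem statement16 (u : ℕ → Bool) (hu : IsStandard u)
    (θ : ℝ) (hθ : HasSlope u θ) (a : ℕ → ℕ) (hcf : HasCF θ a)
    (ha1 : a 1 = 1) (ha2 : a 2 = 3) (ha : ∀ n, 3 ≤ n → a n = 2)
    (w : List (ZMod 6 ⊕ ZMod 6)) (hw : Bispecial (colourCyc 6 u) w)
    (hπa : false ∈ w.map proj) (hπb : true ∈ w.map proj)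
    (v : List (ZMod 6 ⊕ ZMod 6)) (hv : IsReturnWord (colourCyc 6 u) w v) :
    (w.length : ℝ) / (v.length : ℝ) < 1 / 10 := by
  obtain ⟨i, j, hij, hoi, hoj, -, rfl⟩ := hv
  rw [fa_length]
  have hst := hu.1
  have hfreq := freq_value hθ hcf ha1 ha2 ha
  have hdr := drift hst hfreq
  set α : ℝ := (6 + √2)/17 with hα
  set n := w.length with hn
  have hz : ∀ k, k < n → colourCyc 6 u (i+k) = colourCyc 6 u (j+k) := by
    have : factorAt (colourCyc 6 u) i n = factorAt (colourCyc 6 u) j n := hoi.trans hoj.symm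
    exact (fa_eq_iff _ _ _ _).1 this
  have hz' : ∀ k, k < n → u (i+k) = u (j+k) := by
    intro k hk
    rw [← proj_colour u, ← proj_colour u, hz k hk]
  have hmem : ∀ c, c ∈ w.map proj → ∃ k, k < n ∧ u (i+k) = c := by
    intro c hc
    rw [← hoi] at hc
    simp only [factorAt, List.map_map, List.mem_map, List.mem_range, Function.comp] at hc
    obtain ⟨k, hk, hk'⟩ := hc
    exact ⟨k, hk, by rw [← hk', proj_colour]⟩
  have dvd : ∀ c, c ∈ w.map proj → (6:ℤ) ∣ (countBefore u c j : ℤ) - countBefore u c i := by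
    intro c hc
    obtain ⟨k, hk, huk⟩ := hmem c hc
    have hc1 := hz k hk
    have huk' : u (j+k) = c := by rw [← hz' k hk]; exact huk
    have hsh := cb_shift hz' c k hk.le
    have hcast : ((countBefore u c (i+k) : ℕ) : ZMod 6) = ((countBefore u c (j+k) : ℕ) : ZMod 6) := by
      cases c
      · rw [colour_false huk, colour_false huk'] at hc1
        exact Sum.inl.inj hc1
      · rw [colour_true huk, colour_true huk'] at hc1
        exact Sum.inr.inj hc1
    rw [ZMod.natCast_eq_natCast_iff] at hcast
    have := (Nat.modEq_iff_dvd.1 hcast)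
    rw [show (countBefore u c j : ℤ) - countBefore u c i
      = countBefore u c (j+k) - countBefore u c (i+k) by linarith]
    exact_mod_cast this
  obtain ⟨A, hA⟩ := dvd false hπa
  obtain ⟨B, hB⟩ := dvd true hπb
  have hn1 : 1 ≤ n := by
    obtain ⟨k, hk, -⟩ := hmem _ hπa
    omega
  have s1 := cb_add u i
  have s2 := cb_add u j
  have hpp : (j:ℤ) - i = 6 * (A + B) := by
    rw [← s1, ← s2]; push_cast; linarith
  have hpR : (j:ℝ) - i = 6 * ((A + B : ℤ) : ℝ) := by exact_mod_cast hpp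
  have hAR : (countBefore u false j : ℝ) - countBefore u false i = 6 * (A : ℝ) := by
    exact_mod_cast hA
  have hd2 : ∀ k l : ℕ, |((countBefore u false k : ℝ) - k * α) - ((countBefore u false l : ℝ) - l * α)| ≤ 1 := by
    intro k l
    rcases le_total k l with h | h
    · obtain ⟨m, rfl⟩ := Nat.exists_eq_add_of_le h
      rw [abs_sub_comm]
      convert hdr k m using 2
      push_cast; ring
    · obtain ⟨m, rfl⟩ := Nat.exists_eq_add_of_le h
      convert hdr l m using 2
      push_cast; ring
  have main := core (fun k => (countBefore u false k : ℤ)) i n hn1 (A + B) A (by omega) (by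
    intro k l h1 h2 h3 h4
    rw [← hα]
    have sh : ∀ k, i ≤ k → k < i + (n+1) →
        (countBefore u false (k + (j - i)) : ℝ) = countBefore u false k + 6 * A := by
      intro k h1 h2
      have := cb_shift hz' false (k - i) (by omega)
      rw [show i + (k-i) = k by omega, show j + (k - i) = k + (j-i) by omega] at this
      have : (countBefore u false (k + (j-i)) : ℤ) = countBefore u false k + 6 * A := by linarith
      exact_mod_cast this
    have sk := sh k h1 h2
    have sl := sh l h3 h4
    have a1 := (abs_le.1 (hd2 (k + (j-i)) l)).2
    have a2 := (abs_le.1 (hd2 k (l + (j-i)))).2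
    have cj : ((j - i : ℕ) : ℝ) = 6 * ((A + B : ℤ) : ℝ) := by
      rw [Nat.cast_sub hij.le]; exact hpR
    rw [sk] at a1
    rw [sl] at a2
    rw [Nat.cast_add, cj] at a1 a2
    simp only [Int.cast_natCast]
    rcases abs_cases (((A + B : ℤ) : ℝ) * α - A) with ⟨h, _⟩ | ⟨h, _⟩ <;> rw [h] <;> linarith)
  have hlt : 10 * (n:ℤ) < (j:ℤ) - i := by omega
  have hltR : 10 * (n:ℝ) < (j:ℝ) - i := by exact_mod_cast hlt
  rw [Nat.cast_sub hij.le, div_lt_div_iff₀ _ (by norm_num)]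
  · linarith
  · have : (0:ℝ) ≤ n := by positivity
    have : (1:ℝ) ≤ n := by exact_mod_cast hn1
    linarith

end BalancedCE
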